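/- Let X be a real-valued random variable with unbounded distribution F and Y a nonnegative random variable with distribution G, neither degenerate at zero, and let H be the distribution of XY. Suppose (X,Y) follows an FGM distribution with parameter |θ|<1 and satisfies Assumption 2 (Ḡ(bx)=o(H̄(x)) as x→∞ for every constant b>0). If F belongs to the class L(γ) for some γ≥0, then H belongs to L(γ/β_G), where β_G=sup{y:G(y)<1} and γ/β_G is understood as 0 when β_G=∞. -/

import Mathlib

open MeasureTheory ProbabilityTheory Filter Set Asymptotics

noncomputable section

/-- The tail (survival) function `x ↦ P(Z > x)` of a random variable `Z`. -/
def rvTail {Ω : Type*} [MeasureSpace Ω] (Z : Ω → ℝ) (x : ℝ) : ℝ :=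
  (ℙ {ω | x < Z ω}).toReal

/-- The cumulative distribution function `x ↦ P(Z ≤ x)` of a random variable `Z`. -/
def rvCdf {Ω : Type*} [MeasureSpace Ω] (Z : Ω → ℝ) (x : ℝ) : ℝ :=
  (ℙ {ω | Z ω ≤ x}).toReal

/-- The left limit of the cdf, `G(y-) = P(Z < y)`. -/
def rvCdfLeft {Ω : Type*} [MeasureSpace Ω] (Z : Ω → ℝ) (y : ℝ) : ℝ :=
  (ℙ {ω | Z ω < y}).toReal

/-- The distribution of `Z` is unbounded (above): its tail is positive for every `x > 0`. -/
def UnboundedDist {Ω : Type*} [MeasureSpace Ω] (Z : Ω → ℝ) : Prop :=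
  ∀ x > 0, 0 < rvTail Z x

/-- The support `D_Z = {y : P(Z ∈ (y - δ, y + δ)) > 0 for all δ > 0}` of the
distribution of `Z`. -/
def distSupport {Ω : Type*} [MeasureSpace Ω] (Z : Ω → ℝ) : Set ℝ :=
  {y | ∀ δ > 0, 0 < ℙ {ω | Z ω ∈ Ioo (y - δ) (y + δ)}}

/-- The distribution of `Z` belongs to the class `L(γ)`: it is unbounded above and
`P(Z > x - t) ~ e^{γ t} P(Z > x)` as `x → ∞`, for every `t > 0`. -/
def MemLGamma {Ω : Type*} [MeasureSpace Ω] (Z : Ω → ℝ) (γ : ℝ) : Prop :=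
  UnboundedDist Z ∧
    ∀ t > 0, (fun x => rvTail Z (x - t)) ~[atTop] (fun x => Real.exp (γ * t) * rvTail Z x)

/-- The tail of the two-fold convolution of the distribution of `Z` with itself. -/
def convSqTail {Ω : Type*} [MeasureSpace Ω] (Z : Ω → ℝ) (x : ℝ) : ℝ :=
  (((Measure.map Z ℙ).conv (Measure.map Z ℙ)) (Ioi x)).toReal

/-- The distribution of `Z` belongs to the class `S(γ)`: it belongs to `L(γ)`, the
exponential moment `c = ∫ e^{γ y} dV(y)` is finite, and the tail of the two-fold
convolution satisfies `V̄*²(x) ~ 2 c V̄(x)` as `x → ∞`. -/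
def MemSGamma {Ω : Type*} [MeasureSpace Ω] (Z : Ω → ℝ) (γ : ℝ) : Prop :=
  MemLGamma Z γ ∧
    Integrable (fun y => Real.exp (γ * y)) (Measure.map Z ℙ) ∧
    (fun x => convSqTail Z x) ~[atTop]
      (fun x => 2 * (∫ y, Real.exp (γ * y) ∂(Measure.map Z ℙ)) * rvTail Z x)

open Classical in
/-- `γ / β_G`, where `β_G = sup {y : G(y) < 1}` is the right endpoint of the distribution
of `Z`, with the convention that `γ / β_G = 0` when `β_G = ∞`.
(Note that `G(y) < 1 ↔ P(Z > y) > 0`.) -/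
def gammaOverBeta {Ω : Type*} [MeasureSpace Ω] (Z : Ω → ℝ) (γ : ℝ) : ℝ :=
  if BddAbove {y : ℝ | 0 < rvTail Z y} then γ / sSup {y : ℝ | 0 < rvTail Z y} else 0

/-- Assumption 2: `Ḡ(b x) = o(H̄(x))` as `x → ∞` for every constant `b > 0`, where `G` is
the distribution of `Y` and `H` is the distribution of the product `X Y`. -/
def Assumption2 {Ω : Type*} [MeasureSpace Ω] (X Y : Ω → ℝ) : Prop :=
  ∀ b > 0, (fun x => rvTail Y (b * x)) =o[atTop] fun x => rvTail (fun ω => X ω * Y ω) x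

/-- Assumption 1: `K x y` is the conditional probability `P(X > x | Y = y)`, namely for
`y` in the support of `Y` it is the limit of `P(X > x | Y ∈ (y - δ, y + δ])` as `δ → 0+`,
and for `y` outside the support it is the unconditional probability `P(X > x)` (and then
`h y = 1`); `h : [0,∞) → (0,∞)` is a measurable function such that
`P(X > x | Y = y) ~ h(y) P(X > x)` as `x → ∞`, uniformly for `y ≥ 0`. -/
def Assumption1 {Ω : Type*} [MeasureSpace Ω] (X Y : Ω → ℝ) (h : ℝ → ℝ) (K : ℝ → ℝ → ℝ) :
    Prop :=
  Measurable h ∧ (∀ y, 0 ≤ y → 0 < h y) ∧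
    (∀ y, y ∉ distSupport Y → h y = 1 ∧ ∀ x, K x y = rvTail X x) ∧
    (∀ y ∈ distSupport Y, ∀ x : ℝ,
      Tendsto
        (fun δ : ℝ => (ℙ {ω | x < X ω ∧ Y ω ∈ Ioc (y - δ) (y + δ)}).toReal /
          (ℙ {ω | Y ω ∈ Ioc (y - δ) (y + δ)}).toReal)
        (nhdsWithin 0 (Ioi 0)) (nhds (K x y))) ∧
    ∀ ε > 0, ∀ᶠ x in atTop, ∀ y, 0 ≤ y → |K x y / (h y * rvTail X x) - 1| < ε

/-- `(X, Y)` follows a Farlie–Gumbel–Morgenstern (FGM) distribution with parameter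
`θ ∈ [-1, 1]`: `P(X > x, Y > y) = F̄(x) Ḡ(y) (1 + θ F(x) G(y))` for all `x` in the
support of `X` and `y` in the support of `Y`. -/
def FGM {Ω : Type*} [MeasureSpace Ω] (X Y : Ω → ℝ) (θ : ℝ) : Prop :=
  θ ∈ Icc (-1 : ℝ) 1 ∧
    ∀ x ∈ distSupport X, ∀ y ∈ distSupport Y,
      (ℙ {ω | x < X ω ∧ y < Y ω}).toReal =
        rvTail X x * rvTail Y y * (1 + θ * rvCdf X x * rvCdf Y y)

/-- `(X, Y)` follows a bivariate Sarmanov distribution with kernels `φ₁, φ₂` and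
parameter `θ`: the joint law has density `1 + θ φ₁(x) φ₂(y)` with respect to the product
of the marginal laws, where `φ₁, φ₂` are measurable, `E φ₁(X) = E φ₂(Y) = 0` and
`1 + θ φ₁(x) φ₂(y) ≥ 0`. -/
def Sarmanov {Ω : Type*} [MeasureSpace Ω] (X Y : Ω → ℝ) (φ₁ φ₂ : ℝ → ℝ) (θ : ℝ) : Prop :=
  Measurable φ₁ ∧ Measurable φ₂ ∧
    Integrable (fun ω => φ₁ (X ω)) ℙ ∧ Integrable (fun ω => φ₂ (Y ω)) ℙ ∧
    (∫ ω, φ₁ (X ω)) = 0 ∧ (∫ ω, φ₂ (Y ω)) = 0 ∧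
    (∀ x y : ℝ, 0 ≤ y → 0 ≤ 1 + θ * φ₁ x * φ₂ y) ∧
    Measure.map (fun ω => (X ω, Y ω)) ℙ =
      ((Measure.map X ℙ).prod (Measure.map Y ℙ)).withDensity
        (fun p => ENNReal.ofReal (1 + θ * φ₁ p.1 * φ₂ p.2))

/-- The condition `ψ(y) = lim_{δ → 0+} (∫_{y-δ}^{y+δ} φ₂(v) G(dv)) / (G(y+δ) - G(y-δ))`
for all `y` in the support of `Y`. -/
def SarmanovPsi {Ω : Type*} [MeasureSpace Ω] (Y : Ω → ℝ) (φ₂ ψ : ℝ → ℝ) : Prop :=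
  ∀ y ∈ distSupport Y,
    Tendsto
      (fun δ : ℝ => (∫ v in Ioc (y - δ) (y + δ), φ₂ v ∂(Measure.map Y ℙ)) /
        (rvCdf Y (y + δ) - rvCdf Y (y - δ)))
      (nhdsWithin 0 (Ioi 0)) (nhds (ψ y))

/-!
Let `k_V(x) = V(x-) - V̄(x)`. The FGM law of `(X, Y)` has density `1 + θ k_F(x) k_G(y)` with respect
to `F ⊗ G`, so given `Y = y` the tail of `X` is `F̄(u) (1 + c F(u))` with `c = θ k_G(y)`. Since
`|c| ≤ |θ| < 1`, these conditional tails inherit the asymptotics of `L(γ)` from `F̄` uniformly in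
`y`. For `M < β_G` split `P(XY > x - t)` according to `Y ≤ M`, `M < Y ≤ b x` and `Y > b x`.
* On the middle part `XY > x - t` implies `X > x / Y - t / M`, which by uniformity costs
  asymptotically a factor of at most `e^{γ t / M}`.
* The part `Y > b x` is negligible by Assumption 2.
* The part `Y ≤ M` is at most of order `F̄((x - t) / M) P(0 < Y ≤ M)`, whereas for `M < M' < β_G`
  the tail of `XY` at `x` is at least of order `F̄(x / M') Ḡ(M')`. For `γ > 0` the ratio of these
  tends to zero, because `F̄(u + s) ~ e^{-γ s} F̄(u)` for every `s`; for `γ = 0` it becomes small by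
  taking `M` small, which is harmless because then `e^{γ t / M} = 1`.

Letting `M ↑ β_G` when `γ > 0` gives the upper bound. If `β_G < ∞`, the lower bound follows in the
same way from `Y ≤ β_G` and `X > x / Y = (x / Y - t / β_G) + t / β_G`; if `β_G = ∞` it is the
monotonicity of the tail.
-/

section SignedRank

/-- The function `x ↦ V(x) + V(x-) - 1` of a distribution `V`, in the symmetric form
`V(x-) - V̄(x)`. It has mean zero, and it is the kernel of the FGM law seen as a Sarmanov law;
unlike the kernel `1 - 2V` of the continuous case it is correct at the atoms of `V` as well. -/
def signedRank (μ : Measure ℝ) (x : ℝ) : ℝ :=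
  μ.real (Iio x) - μ.real (Ioi x)

variable {μ : Measure ℝ} [IsFiniteMeasure μ]

lemma monotone_signedRank : Monotone (signedRank μ) := fun _ _ hxy =>
  sub_le_sub (measureReal_mono (Iio_subset_Iio hxy)) (measureReal_mono (Ioi_subset_Ioi hxy))

lemma abs_signedRank_le (x : ℝ) : |signedRank μ x| ≤ μ.real univ :=
  abs_sub_le_of_nonneg_of_le measureReal_nonneg (measureReal_mono (subset_univ _))
    measureReal_nonneg (measureReal_mono (subset_univ _))

lemma abs_mul_signedRank_le_abs [IsProbabilityMeasure μ] (c x : ℝ) :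
    |c * signedRank μ x| ≤ |c| := by
  rw [abs_mul]
  exact mul_le_of_le_one_right (abs_nonneg c) (by simpa using abs_signedRank_le (μ := μ) x)

lemma integrable_signedRank (ν : Measure ℝ) [IsFiniteMeasure ν] :
    Integrable (signedRank μ) ν :=
  .of_bound monotone_signedRank.measurable.aestronglyMeasurable (μ.real univ)
    (ae_of_all _ abs_signedRank_le)

lemma integral_signedRank_self (μ : Measure ℝ) [IsFiniteMeasure μ] :
    ∫ x, signedRank μ x ∂μ = 0 := by
  have hmono : Monotone fun x => μ (Iio x) := fun _ _ h => measure_mono (Iio_subset_Iio h)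
  have hanti : Antitone fun x => μ (Ioi x) := fun _ _ h => measure_mono (Ioi_subset_Ioi h)
  have hswap : ∫⁻ x, μ (Iio x) ∂μ = ∫⁻ x, μ (Ioi x) ∂μ :=
    have hlt : MeasurableSet {p : ℝ × ℝ | p.2 < p.1} :=
      measurableSet_lt measurable_snd measurable_fst
    (Measure.prod_apply hlt).symm.trans (Measure.prod_apply_symm hlt)
  have hint : ∀ s : ℝ → Set ℝ, Measurable (fun x => μ (s x)) →
      Integrable (fun x => μ.real (s x)) μ :=
    fun s hs => .of_bound hs.ennreal_toReal.aestronglyMeasurable (μ.real univ)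
      (ae_of_all _ fun x => by
        simpa only [Real.norm_of_nonneg measureReal_nonneg] using measureReal_mono (subset_univ _))
  simp only [signedRank]
  rw [integral_sub (hint _ hmono.measurable) (hint _ hanti.measurable), sub_eq_zero]
  simp only [Measure.real]
  rw [integral_toReal hmono.measurable.aemeasurable (ae_of_all _ fun _ => measure_lt_top _ _),
    integral_toReal hanti.measurable.aemeasurable (ae_of_all _ fun _ => measure_lt_top _ _), hswap]

lemma setIntegral_Ioi_signedRank (μ : Measure ℝ) [IsFiniteMeasure μ] (a : ℝ) :
    ∫ x in Ioi a, signedRank μ x ∂μ = μ.real (Ioi a) * μ.real (Iic a) := by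
  have hdecomp : ∀ x ∈ Ioi a,
      signedRank μ x = signedRank (μ.restrict (Ioi a)) x + μ.real (Iic a) := by
    intro x hx
    have hIio : μ.real (Iio x) = μ.real (Ioo a x) + μ.real (Iic a) := by
      rw [← Iic_union_Ioo_eq_Iio hx, measureReal_union _ measurableSet_Ioo, add_comm]
      exact disjoint_left.mpr fun y hya hy => hya.not_gt hy.1
    rw [signedRank, signedRank, measureReal_restrict_apply measurableSet_Iio,
      measureReal_restrict_apply measurableSet_Ioi, Iio_inter_Ioi,
      inter_eq_left.mpr (Ioi_subset_Ioi (le_of_lt hx)), hIio]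
    ring
  rw [setIntegral_congr_fun measurableSet_Ioi hdecomp,
    integral_add (integrable_signedRank _) (integrable_const _), integral_signedRank_self,
    integral_const, smul_eq_mul, measureReal_restrict_apply_univ, zero_add]

end SignedRank

section FgmLaw

/-- The law on the plane with marginals `μ`, `ν` and density `1 + θ k_μ(x) k_ν(y)` with respect to
`μ ⊗ ν`, where `k` is the signed rank; by `FGM.map_eq_fgmLaw` these are the FGM laws. -/
def fgmLaw (θ : ℝ) (μ ν : Measure ℝ) : Measure (ℝ × ℝ) :=
  (μ.prod ν).withDensity fun p => ENNReal.ofReal (1 + θ * signedRank ν p.2 * signedRank μ p.1)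

/-- The conditional tail `P(X > u | Y = y)` under `fgmLaw θ μ ν`, as a function of
`c = θ k_ν(y)`. -/
def fgmCondTail (μ : Measure ℝ) (c u : ℝ) : ℝ :=
  μ.real (Ioi u) * (1 + c * μ.real (Iic u))

lemma measurable_fgmDensity {μ ν : Measure ℝ} [IsFiniteMeasure μ] [IsFiniteMeasure ν] (θ : ℝ) :
    Measurable fun p : ℝ × ℝ =>
      ENNReal.ofReal (1 + θ * signedRank ν p.2 * signedRank μ p.1) :=
  (((monotone_signedRank.measurable.comp measurable_snd).const_mul θ).mul
    (monotone_signedRank.measurable.comp measurable_fst)).const_add 1 |>.ennreal_ofReal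

variable {μ ν : Measure ℝ} [IsProbabilityMeasure μ] [IsProbabilityMeasure ν] {θ c : ℝ}

lemma one_sub_abs_le_fgmDensity (hc : |c| ≤ |θ|) (x : ℝ) :
    1 - |θ| ≤ 1 + c * signedRank μ x := by
  linarith [neg_abs_le (c * signedRank μ x), abs_mul_signedRank_le_abs (μ := μ) c x]

lemma fgmDensity_le_one_add_abs (hc : |c| ≤ |θ|) (x : ℝ) :
    1 + c * signedRank μ x ≤ 1 + |θ| := by
  linarith [le_abs_self (c * signedRank μ x), abs_mul_signedRank_le_abs (μ := μ) c x]

lemma setLIntegral_Ioi_one_add_mul_signedRank (hc : |c| ≤ 1) (u : ℝ) :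
    ∫⁻ x in Ioi u, ENNReal.ofReal (1 + c * signedRank μ x) ∂μ =
      ENNReal.ofReal (fgmCondTail μ c u) := by
  have hint : Integrable (fun x => c * signedRank μ x) (μ.restrict (Ioi u)) :=
    (integrable_signedRank _).const_mul c
  have hnonneg : ∀ x, 0 ≤ 1 + c * signedRank μ x := fun x => by
    simpa using one_sub_abs_le_fgmDensity (μ := μ) (θ := 1) (by simpa using hc) x
  calc ∫⁻ x in Ioi u, ENNReal.ofReal (1 + c * signedRank μ x) ∂μ
      = ENNReal.ofReal (∫ x in Ioi u, (1 + c * signedRank μ x) ∂μ) :=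
        (ofReal_integral_eq_lintegral_ofReal ((integrable_const 1).add hint)
          (ae_of_all _ hnonneg)).symm
    _ = ENNReal.ofReal (fgmCondTail μ c u) := by
        rw [integral_add (integrable_const 1) hint, integral_const_mul, setIntegral_Ioi_signedRank,
          integral_const, measureReal_restrict_apply_univ, smul_eq_mul, fgmCondTail]
        ring_nf

lemma fgmLaw_setOf_lt (hθ : |θ| ≤ 1) {B : Set ℝ} (hB : MeasurableSet B) {φ : ℝ → ℝ}
    (hφ : Measurable φ) :
    fgmLaw θ μ ν {p | φ p.2 < p.1 ∧ p.2 ∈ B} =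
      ∫⁻ y in B, ENNReal.ofReal (fgmCondTail μ (θ * signedRank ν y) (φ y)) ∂ν := by
  have hA : MeasurableSet {p : ℝ × ℝ | φ p.2 < p.1} :=
    measurableSet_lt (hφ.comp measurable_snd) measurable_fst
  have hset : {p : ℝ × ℝ | φ p.2 < p.1 ∧ p.2 ∈ B} = {p | φ p.2 < p.1} ∩ univ ×ˢ B := by
    ext; simp
  rw [hset, fgmLaw, withDensity_apply _ (hA.inter (MeasurableSet.univ.prod hB)),
    ← Measure.restrict_restrict hA, ← lintegral_indicator hA, setLIntegral_prod_symm _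
      ((measurable_fgmDensity θ).indicator hA).aemeasurable, Measure.restrict_univ]
  refine lintegral_congr fun y => ?_
  rw [← setLIntegral_Ioi_one_add_mul_signedRank ((abs_mul_signedRank_le_abs θ y).trans hθ),
    ← lintegral_indicator measurableSet_Ioi]
  rfl

lemma abs_mul_measureReal_le_abs (c : ℝ) (s : Set ℝ) : |c * μ.real s| ≤ |c| := by
  rw [abs_mul, abs_of_nonneg (measureReal_nonneg (μ := μ))]
  exact mul_le_of_le_one_right (abs_nonneg c) measureReal_le_one

lemma fgmLaw_Ioi_prod_Ioi (hθ : |θ| ≤ 1) (x y : ℝ) :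
    fgmLaw θ μ ν (Ioi x ×ˢ Ioi y) = ENNReal.ofReal
      (μ.real (Ioi x) * ν.real (Ioi y) * (1 + θ * μ.real (Iic x) * ν.real (Iic y))) := by
  have hc : |θ * μ.real (Iic x)| ≤ 1 := (abs_mul_measureReal_le_abs θ (Iic x)).trans hθ
  calc fgmLaw θ μ ν (Ioi x ×ˢ Ioi y)
      = ∫⁻ z in Ioi y, ENNReal.ofReal (fgmCondTail μ (θ * signedRank ν z) x) ∂ν :=
        fgmLaw_setOf_lt hθ measurableSet_Ioi measurable_const
    _ = ∫⁻ z in Ioi y, ENNReal.ofReal (μ.real (Ioi x)) *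
          ENNReal.ofReal (1 + θ * μ.real (Iic x) * signedRank ν z) ∂ν := by
        refine lintegral_congr fun z => ?_
        rw [fgmCondTail, ENNReal.ofReal_mul measureReal_nonneg, mul_right_comm]
    _ = ENNReal.ofReal (μ.real (Ioi x)) *
          ENNReal.ofReal (fgmCondTail ν (θ * μ.real (Iic x)) y) := by
        rw [lintegral_const_mul' _ _ ENNReal.ofReal_ne_top,
          setLIntegral_Ioi_one_add_mul_signedRank hc]
    _ = _ := by
        rw [← ENNReal.ofReal_mul measureReal_nonneg, fgmCondTail, mul_assoc (μ.real (Ioi x))]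

lemma smul_prod_le_fgmLaw :
    ENNReal.ofReal (1 - |θ|) • μ.prod ν ≤ fgmLaw θ μ ν := by
  rw [← withDensity_const]
  exact withDensity_mono (ae_of_all _ fun p => ENNReal.ofReal_le_ofReal
    (one_sub_abs_le_fgmDensity (abs_mul_signedRank_le_abs θ p.2) p.1))

lemma fgmLaw_le_smul_prod :
    fgmLaw θ μ ν ≤ ENNReal.ofReal (1 + |θ|) • μ.prod ν := by
  rw [← withDensity_const]
  exact withDensity_mono (ae_of_all _ fun p => ENNReal.ofReal_le_ofReal
    (fgmDensity_le_one_add_abs (abs_mul_signedRank_le_abs θ p.2) p.1))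

lemma measure_prod_ext_of_Ioi {π ρ : Measure (ℝ × ℝ)} [IsFiniteMeasure π]
    (h : ∀ x y, π (Ioi x ×ˢ Ioi y) = ρ (Ioi x ×ˢ Ioi y)) : π = ρ := by
  have hgen : MeasurableSpace.generateFrom (range (Ioi : ℝ → Set ℝ)) = Real.measurableSpace :=
    (borel_eq_generateFrom_Ioi ℝ).symm.trans (BorelSpace.measurable_eq).symm
  have hcover : ⋃ n : ℕ, Ioi (-n : ℝ) = univ :=
    iUnion_eq_univ_iff.mpr fun x => (exists_nat_gt (-x)).imp fun _ hn => neg_lt.mp hn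
  have hspan : IsCountablySpanning (range (Ioi : ℝ → Set ℝ)) :=
    ⟨fun n : ℕ => Ioi (-n : ℝ), fun n => mem_range_self _, hcover⟩
  obtain ⟨B, hB, hBuniv⟩ := hspan.prod hspan
  refine Measure.ext_of_generateFrom_of_iUnion _ B (generateFrom_eq_prod hgen hgen hspan hspan).symm
    (isPiSystem_Ioi.prod isPiSystem_Ioi) hBuniv hB (fun n => measure_ne_top π _) ?_
  rintro _ ⟨_, ⟨x, rfl⟩, _, ⟨y, rfl⟩, rfl⟩
  exact h x y

end FgmLaw

section JointLaw

lemma exists_Ioi_ae_eq_of_support (μ : Measure ℝ) (x : ℝ) :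
    ∃ S ∈ insert univ (Ioi '' μ.support), Ioi x =ᵐ[μ] S := by
  rcases eq_or_ne (μ (Iic x)) 0 with h0 | h0
  · exact ⟨univ, mem_insert _ _, ae_eq_univ.mpr (by rwa [compl_Ioi])⟩
  have hbdd : BddAbove (Iic x ∩ μ.support) := bddAbove_Iic.mono inter_subset_left
  have hmem : sSup (Iic x ∩ μ.support) ∈ Iic x ∩ μ.support :=
    (isClosed_Iic.inter Measure.isClosed_support).csSup_mem
      (Measure.nonempty_inter_support_of_pos (pos_iff_ne_zero.mpr h0)) hbdd
  have hgap : μ (Ioc (sSup (Iic x ∩ μ.support)) x) = 0 :=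
    measure_mono_null (fun z hz hzs => (le_csSup hbdd ⟨hz.2, hzs⟩).not_gt hz.1)
      Measure.measure_compl_support
  refine ⟨_, mem_insert_of_mem _ ⟨_, hmem.2, rfl⟩, ?_⟩
  rw [← Ioc_union_Ioi_eq_Ioi (mem_Iic.mp hmem.1)]
  exact (union_ae_eq_right_of_ae_eq_empty (ae_eq_empty.mpr hgap)).symm

variable {Ω : Type*} [MeasureSpace Ω] {X Y Z : Ω → ℝ}

lemma real_map_Ioi (hZ : Measurable Z) (x : ℝ) : (Measure.map Z ℙ).real (Ioi x) = rvTail Z x :=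
  map_measureReal_apply hZ measurableSet_Ioi

lemma real_map_Iic (hZ : Measurable Z) (x : ℝ) : (Measure.map Z ℙ).real (Iic x) = rvCdf Z x :=
  map_measureReal_apply hZ measurableSet_Iic

lemma distSupport_eq_support_map (hZ : Measurable Z) :
    distSupport Z = (Measure.map Z ℙ).support := by
  ext y
  rw [(nhds_basis_Ioo_pos y).mem_measureSupport]
  refine forall₂_congr fun δ _ => ?_
  rw [Measure.map_apply hZ measurableSet_Ioo]
  rfl

variable [IsProbabilityMeasure (ℙ : Measure Ω)] {θ : ℝ}

lemma FGM.real_preimage_Ioi_inter (hFGM : FGM X Y θ) (hX : Measurable X) (hY : Measurable Y)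
    (x y : ℝ) :
    (ℙ : Measure Ω).real (X ⁻¹' Ioi x ∩ Y ⁻¹' Ioi y) =
      (Measure.map X ℙ).real (Ioi x) * (Measure.map Y ℙ).real (Ioi y) *
        (1 + θ * (Measure.map X ℙ).real (Iic x) * (Measure.map Y ℙ).real (Iic y)) := by
  have := Measure.isProbabilityMeasure_map (μ := ℙ) hX.aemeasurable
  have := Measure.isProbabilityMeasure_map (μ := ℙ) hY.aemeasurable
  let FgmOn (S T : Set ℝ) : Prop := (ℙ : Measure Ω).real (X ⁻¹' S ∩ Y ⁻¹' T) =
    (Measure.map X ℙ).real S * (Measure.map Y ℙ).real T *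
      (1 + θ * (Measure.map X ℙ).real Sᶜ * (Measure.map Y ℙ).real Tᶜ)
  have hcongr : ∀ {S S' T T' : Set ℝ}, S =ᵐ[Measure.map X ℙ] S' → T =ᵐ[Measure.map Y ℙ] T' →
      FgmOn S' T' → FgmOn S T := by
    intro S S' T T' hS hT h
    have hST := ((hX.quasiMeasurePreserving ℙ).preimage_ae_eq hS).inter
      ((hY.quasiMeasurePreserving ℙ).preimage_ae_eq hT)
    simp only [FgmOn, measureReal_congr hS, measureReal_congr hT, measureReal_congr hS.compl,
      measureReal_congr hT.compl, measureReal_congr hST]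
    exact h
  suffices FgmOn (Ioi x) (Ioi y) by simpa only [FgmOn, compl_Ioi] using this
  obtain ⟨S, hS, hSx⟩ := exists_Ioi_ae_eq_of_support (Measure.map X ℙ) x
  obtain ⟨T, hT, hTy⟩ := exists_Ioi_ae_eq_of_support (Measure.map Y ℙ) y
  rcases hS with rfl | ⟨x', hx', rfl⟩
  · exact hcongr hSx .rfl (by simp [FgmOn, map_measureReal_apply hY measurableSet_Ioi])
  rcases hT with rfl | ⟨y', hy', rfl⟩
  · exact hcongr .rfl hTy (by simp [FgmOn, map_measureReal_apply hX measurableSet_Ioi])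
  refine hcongr hSx hTy ?_
  simp only [FgmOn, compl_Ioi, real_map_Ioi hX, real_map_Ioi hY, real_map_Iic hX, real_map_Iic hY]
  rw [← distSupport_eq_support_map hX] at hx'
  rw [← distSupport_eq_support_map hY] at hy'
  exact hFGM.2 x' hx' y' hy'

lemma FGM.map_eq_fgmLaw (hFGM : FGM X Y θ) (hX : Measurable X) (hY : Measurable Y) :
    Measure.map (fun ω => (X ω, Y ω)) ℙ = fgmLaw θ (Measure.map X ℙ) (Measure.map Y ℙ) := by
  have := Measure.isProbabilityMeasure_map (μ := ℙ) hX.aemeasurable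
  have := Measure.isProbabilityMeasure_map (μ := ℙ) hY.aemeasurable
  refine measure_prod_ext_of_Ioi fun x y => ?_
  rw [Measure.map_apply (hX.prodMk hY) (measurableSet_Ioi.prod measurableSet_Ioi),
    fgmLaw_Ioi_prod_Ioi (abs_le.mpr hFGM.1), ← hFGM.real_preimage_Ioi_inter hX hY x y,
    ofReal_measureReal]
  rfl

end JointLaw

section CondTail

variable {μ : Measure ℝ} [IsProbabilityMeasure μ]

lemma tendsto_real_Ioi_atTop_zero (μ : Measure ℝ) [IsProbabilityMeasure μ] :
    Tendsto (fun u => μ.real (Ioi u)) atTop (nhds 0) := by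
  have h : ∀ u, 1 - cdf μ u = μ.real (Ioi u) := fun u => by
    rw [cdf_eq_real, ← probReal_compl_eq_one_sub measurableSet_Iic, compl_Iic]
  simpa [h] using (tendsto_cdf_atTop μ).const_sub 1

lemma tendsto_real_Ioc_nhdsGT_zero (μ : Measure ℝ) [IsFiniteMeasure μ] (a : ℝ) :
    Tendsto (fun b => μ.real (Ioc a b)) (nhdsWithin a (Ioi a)) (nhds 0) := by
  have hempty : ⋂ b, ⋂ _ : b > a, Ioc a b = ∅ := by
    refine eq_empty_iff_forall_notMem.mpr fun x hx => ?_
    simp only [mem_iInter, mem_Ioc] at hx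
    obtain ⟨b, hab, hbx⟩ := exists_between (hx (a + 1) (lt_add_one a)).1
    exact (hx b hab).2.not_gt hbx
  have h := tendsto_measure_biInter_gt (μ := μ) (s := fun b => Ioc a b) (a := a)
    (fun _ _ => measurableSet_Ioc.nullMeasurableSet)
    (fun _ _ _ hij => Ioc_subset_Ioc_right hij) ⟨a + 1, lt_add_one a, measure_ne_top μ _⟩
  rw [hempty, measure_empty] at h
  exact (ENNReal.tendsto_toReal ENNReal.zero_ne_top).comp h

lemma fgmCondTail_le_mul {u v c r : ℝ} (hr : r < 1) (hc : |c| ≤ r) :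
    fgmCondTail μ c v ≤ μ.real (Ioi v) * (1 + |μ.real (Ioi u) - μ.real (Ioi v)| / (1 - r)) *
      (1 + c * μ.real (Iic u)) := by
  have hIic : ∀ w, μ.real (Iic w) = 1 - μ.real (Ioi w) := fun w => by
    rw [← probReal_compl_eq_one_sub measurableSet_Ioi, compl_Ioi]
  set d := |μ.real (Ioi u) - μ.real (Ioi v)|
  have hlower : 1 - r ≤ 1 + c * μ.real (Iic u) := by
    linarith [neg_abs_le (c * μ.real (Iic u)), abs_mul_measureReal_le_abs (μ := μ) c (Iic u)]
  have hdiff : c * (μ.real (Ioi u) - μ.real (Ioi v)) ≤ d := by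
    refine (le_abs_self _).trans ?_
    rw [abs_mul]
    exact mul_le_of_le_one_left (abs_nonneg _) (hc.trans hr.le)
  have hd : d ≤ d / (1 - r) * (1 + c * μ.real (Iic u)) := by
    rw [div_mul_eq_mul_div, le_div_iff₀ (sub_pos.mpr hr)]
    exact mul_le_mul_of_nonneg_left hlower (abs_nonneg _)
  rw [fgmCondTail, mul_assoc]
  refine mul_le_mul_of_nonneg_left ?_ measureReal_nonneg
  calc 1 + c * μ.real (Iic v)
      = 1 + c * μ.real (Iic u) + c * (μ.real (Ioi u) - μ.real (Ioi v)) := by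
        rw [hIic u, hIic v]; ring
    _ ≤ (1 + d / (1 - r)) * (1 + c * μ.real (Iic u)) := by linarith

-- `|c| ≤ r < 1` keeps the second factor of the conditional tail away from zero, which is what
-- makes the comparison uniform in `c`.
lemma eventually_fgmCondTail_sub_le (hpos : ∀ u, 0 < μ.real (Ioi u)) {s L C r : ℝ}
    (hL : Tendsto (fun u => μ.real (Ioi (u - s)) / μ.real (Ioi u)) atTop (nhds L))
    (hC : L < C) (hr : r < 1) :
    ∀ᶠ u in atTop, ∀ c, |c| ≤ r → fgmCondTail μ c (u - s) ≤ C * fgmCondTail μ c u := by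
  have htail := tendsto_real_Ioi_atTop_zero μ
  have hshift : Tendsto (fun u => μ.real (Ioi (u - s))) atTop (nhds 0) :=
    htail.comp (tendsto_atTop_add_const_right _ (-s) tendsto_id)
  have hfactor : Tendsto (fun u => μ.real (Ioi (u - s)) / μ.real (Ioi u) *
      (1 + |μ.real (Ioi u) - μ.real (Ioi (u - s))| / (1 - r))) atTop (nhds L) := by
    simpa using hL.mul (((htail.sub hshift).abs.div_const (1 - r)).const_add 1)
  filter_upwards [hfactor.eventually_lt_const hC] with u hu c hc
  rw [div_mul_eq_mul_div, div_lt_iff₀ (hpos u)] at hu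
  have hnonneg : 0 ≤ 1 + c * μ.real (Iic u) := by
    linarith [neg_abs_le (c * μ.real (Iic u)), abs_mul_measureReal_le_abs (μ := μ) c (Iic u)]
  calc fgmCondTail μ c (u - s)
      ≤ μ.real (Ioi (u - s)) * (1 + |μ.real (Ioi u) - μ.real (Ioi (u - s))| / (1 - r)) *
          (1 + c * μ.real (Iic u)) := fgmCondTail_le_mul hr hc
    _ ≤ C * μ.real (Ioi u) * (1 + c * μ.real (Iic u)) :=
        mul_le_mul_of_nonneg_right hu.le hnonneg
    _ = C * fgmCondTail μ c u := mul_assoc _ _ _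

end CondTail

section ClassL

lemma isEquivalent_const_mul_iff_tendsto_div {α : Type*} {l : Filter α} {u v : α → ℝ} {c : ℝ}
    (hc : c ≠ 0) (hv : ∀ x, v x ≠ 0) :
    u ~[l] (fun x => c * v x) ↔ Tendsto (fun x => u x / v x) l (nhds c) := by
  rw [isEquivalent_iff_tendsto_one (.of_forall fun x => mul_ne_zero hc (hv x)),
    ← tendsto_const_smul_iff₀ hc]
  simp only [Pi.div_apply, smul_eq_mul, mul_one, mul_div_mul_left _ _ hc, ← mul_div_assoc]

lemma tendsto_div_of_eventually_le {α : Type*} {l : Filter α} {u v : α → ℝ} {a : ℝ}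
    (hv : ∀ x, 0 < v x) (ha : 0 < a)
    (hup : ∀ C, a < C → ∀ᶠ x in l, u x ≤ C * v x)
    (hlow : ∀ D, a⁻¹ < D → ∀ᶠ x in l, v x ≤ D * u x) :
    Tendsto (fun x => u x / v x) l (nhds a) := by
  refine tendsto_order.mpr ⟨fun b hb => ?_, fun b hb => ?_⟩
  · obtain ⟨b', hbb', hb'a⟩ := exists_between (max_lt hb ha)
    have hb'0 : 0 < b' := (le_max_right _ _).trans_lt hbb'
    filter_upwards [hlow b'⁻¹ (inv_strictAnti₀ hb'0 hb'a)] with x hx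
    rw [inv_mul_eq_div, le_div_iff₀' hb'0, ← le_div_iff₀ (hv x)] at hx
    exact ((le_max_left _ _).trans_lt hbb').trans_le hx
  · obtain ⟨C, haC, hCb⟩ := exists_between hb
    filter_upwards [hup C haC] with x hx
    exact ((div_le_iff₀ (hv x)).mpr hx).trans_lt hCb

variable {Ω : Type*} [MeasureSpace Ω] {Z : Ω → ℝ} {γ : ℝ}

lemma rvTail_nonneg (Z : Ω → ℝ) (x : ℝ) : 0 ≤ rvTail Z x := ENNReal.toReal_nonneg

variable [IsFiniteMeasure (ℙ : Measure Ω)]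

lemma antitone_rvTail (Z : Ω → ℝ) : Antitone (rvTail Z) := fun _ _ hxy =>
  measureReal_mono fun _ hω => lt_of_le_of_lt hxy hω

lemma rvTail_eq_zero_iff {x : ℝ} : rvTail Z x = 0 ↔ ∀ᵐ ω, Z ω ≤ x := by
  simp only [rvTail, ae_iff, not_le]
  exact measureReal_eq_zero_iff

lemma ae_le_of_forall_rvTail_eq_zero {b : ℝ} (h : ∀ y > b, rvTail Z y = 0) : ∀ᵐ ω, Z ω ≤ b := by
  refine (ae_le_const_iff_forall_gt_measure_zero _ _).mpr fun c hbc => ?_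
  obtain ⟨y, hby, hyc⟩ := exists_between hbc
  exact measure_mono_null (fun ω hω => (hyc.trans_le hω).not_ge)
    (ae_iff.mp (rvTail_eq_zero_iff.mp (h y hby)))

lemma UnboundedDist.rvTail_pos (hZ : UnboundedDist Z) (x : ℝ) : 0 < rvTail Z x :=
  (hZ (max x 1) (by positivity)).trans_le (antitone_rvTail Z (le_max_left x 1))

lemma MemLGamma.tendsto_div (hZ : MemLGamma Z γ) (s : ℝ) :
    Tendsto (fun u => rvTail Z (u - s) / rvTail Z u) atTop (nhds (Real.exp (γ * s))) := by
  have hpos := hZ.1.rvTail_pos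
  have hpos_case : ∀ t > 0,
      Tendsto (fun u => rvTail Z (u - t) / rvTail Z u) atTop (nhds (Real.exp (γ * t))) :=
    fun t ht => (isEquivalent_const_mul_iff_tendsto_div (Real.exp_ne_zero _)
      fun u => (hpos u).ne').mp (hZ.2 t ht)
  rcases lt_trichotomy s 0 with hs | rfl | hs
  · have h := ((hpos_case (-s) (neg_pos.mpr hs)).comp
      (tendsto_atTop_add_const_right atTop (-s) tendsto_id)).inv₀ (Real.exp_ne_zero _)
    simpa [Function.comp_def, ← Real.exp_neg, ← sub_eq_add_neg] using h
  · simp [div_self (hpos _).ne']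
  · exact hpos_case s hs

lemma memLGamma_of_eventually_le (hZ : UnboundedDist Z)
    (hup : ∀ t > 0, ∀ C, Real.exp (γ * t) < C →
      ∀ᶠ x in atTop, rvTail Z (x - t) ≤ C * rvTail Z x)
    (hlow : ∀ t > 0, ∀ D, Real.exp (-(γ * t)) < D →
      ∀ᶠ x in atTop, rvTail Z x ≤ D * rvTail Z (x - t)) :
    MemLGamma Z γ := by
  have hpos := hZ.rvTail_pos
  refine ⟨hZ, fun t ht => (isEquivalent_const_mul_iff_tendsto_div (Real.exp_ne_zero _)
    fun x => (hpos x).ne').mpr ?_⟩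
  refine tendsto_div_of_eventually_le hpos (Real.exp_pos _) (hup t ht) ?_
  rw [← Real.exp_neg]
  exact hlow t ht

end ClassL

section GammaOverBeta

variable {Ω : Type*} [MeasureSpace Ω] {Y : Ω → ℝ}

lemma isGLB_gammaOverBeta (hY : ∃ y > 0, 0 < rvTail Y y) {γ : ℝ} (hγ : 0 ≤ γ) :
    IsGLB ((γ / ·) '' {y | 0 < y ∧ 0 < rvTail Y y}) (gammaOverBeta Y γ) := by
  obtain ⟨y₀, hy₀, hy₀t⟩ := hY
  have hle_div : ∀ b > 0, b ∈ lowerBounds ((γ / ·) '' {y | 0 < y ∧ 0 < rvTail Y y}) →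
      γ / b ∈ upperBounds {y | 0 < rvTail Y y} := by
    intro b hb hlb y hy
    rcases le_or_gt y 0 with hy0 | hy0
    · exact hy0.trans (div_nonneg hγ hb.le)
    · exact (le_div_comm₀ hb hy0).mp (hlb ⟨y, ⟨hy0, hy⟩, rfl⟩)
  rw [gammaOverBeta]
  split_ifs with hbdd
  · have hβ : 0 < sSup {y | 0 < rvTail Y y} := hy₀.trans_le (le_csSup hbdd hy₀t)
    refine ⟨?_, fun b hb => ?_⟩
    · rintro _ ⟨y, ⟨hy0, hy⟩, rfl⟩
      exact div_le_div_of_nonneg_left hγ hy0 (le_csSup hbdd hy)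
    · rcases le_or_gt b 0 with hb0 | hb0
      · exact hb0.trans (div_nonneg hγ hβ.le)
      · exact (le_div_comm₀ hβ hb0).mp (csSup_le ⟨y₀, hy₀t⟩ (hle_div b hb0 hb))
  · refine ⟨?_, fun b hb => ?_⟩
    · rintro _ ⟨y, ⟨hy0, -⟩, rfl⟩
      exact div_nonneg hγ hy0.le
    · exact not_lt.mp fun hb0 => hbdd ⟨_, hle_div b hb0 hb⟩

lemma exists_rvTail_pos_exp_lt (hY : ∃ y > 0, 0 < rvTail Y y) {γ t C : ℝ} (hγ : 0 ≤ γ)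
    (ht : 0 < t) (hC : Real.exp (gammaOverBeta Y γ * t) < C) :
    ∃ y > 0, 0 < rvTail Y y ∧ Real.exp (γ * (t / y)) < C := by
  have hC0 : 0 < C := (Real.exp_pos _).trans hC
  rw [← Real.lt_log_iff_exp_lt hC0, ← lt_div_iff₀ ht,
    isGLB_lt_iff (isGLB_gammaOverBeta hY hγ)] at hC
  obtain ⟨_, ⟨y, ⟨hy0, hy⟩, rfl⟩, hyC⟩ := hC
  refine ⟨y, hy0, hy, ?_⟩
  rwa [← Real.lt_log_iff_exp_lt hC0, mul_div_left_comm, mul_comm, ← lt_div_iff₀ ht]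

lemma exists_rvTail_pos [IsProbabilityMeasure (ℙ : Measure Ω)] (hY : Measurable Y)
    (hY0 : ∀ ω, 0 ≤ Y ω) (hYnd : ℙ {ω | Y ω = 0} ≠ 1) :
    ∃ y > 0, 0 < rvTail Y y := by
  contrapose! hYnd
  have hle : ∀ᵐ ω, Y ω ≤ 0 := ae_le_of_forall_rvTail_eq_zero fun y hy =>
    (hYnd y hy).antisymm (rvTail_nonneg Y y)
  refine (mem_ae_iff_prob_eq_one (hY (measurableSet_singleton 0))).mp ?_
  filter_upwards [hle] with ω hω using hω.antisymm (hY0 ω)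

end GammaOverBeta

section Product

variable {Ω : Type*} [MeasureSpace Ω] [IsProbabilityMeasure (ℙ : Measure Ω)]
  {X Y : Ω → ℝ} {θ γ : ℝ}

lemma FGM.measure_lt_and_mem (hFGM : FGM X Y θ) (hX : Measurable X) (hY : Measurable Y)
    {φ : ℝ → ℝ} (hφ : Measurable φ) {B : Set ℝ} (hB : MeasurableSet B) :
    ℙ {ω | φ (Y ω) < X ω ∧ Y ω ∈ B} = ∫⁻ y in B, ENNReal.ofReal
      (fgmCondTail (Measure.map X ℙ) (θ * signedRank (Measure.map Y ℙ) y) (φ y))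
        ∂Measure.map Y ℙ := by
  have := Measure.isProbabilityMeasure_map (μ := ℙ) hX.aemeasurable
  have := Measure.isProbabilityMeasure_map (μ := ℙ) hY.aemeasurable
  rw [← fgmLaw_setOf_lt (abs_le.mpr hFGM.1) hB hφ, ← hFGM.map_eq_fgmLaw hX hY,
    Measure.map_apply (hX.prodMk hY)]
  · rfl
  · exact (measurableSet_lt (hφ.comp measurable_snd) measurable_fst).inter (measurable_snd hB)

lemma FGM.exists_forall_real_sub_lt_le (hFGM : FGM X Y θ) (hX : Measurable X)
    (hY : Measurable Y) (hθ : |θ| < 1) (hXL : MemLGamma X γ) {s C : ℝ}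
    (hC : Real.exp (γ * s) < C) :
    ∃ u₀, ∀ φ : ℝ → ℝ, Measurable φ → ∀ B : Set ℝ, MeasurableSet B → (∀ y ∈ B, u₀ ≤ φ y) →
      (ℙ : Measure Ω).real {ω | φ (Y ω) - s < X ω ∧ Y ω ∈ B} ≤
        C * (ℙ : Measure Ω).real {ω | φ (Y ω) < X ω ∧ Y ω ∈ B} := by
  have := Measure.isProbabilityMeasure_map (μ := ℙ) hX.aemeasurable
  have := Measure.isProbabilityMeasure_map (μ := ℙ) hY.aemeasurable
  have hC0 : 0 ≤ C := (Real.exp_pos _).le.trans hC.le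
  have hratio := hXL.tendsto_div s
  have hpos := hXL.1.rvTail_pos
  simp only [← real_map_Ioi hX] at hratio hpos
  obtain ⟨u₀, hu₀⟩ := eventually_atTop.mp (eventually_fgmCondTail_sub_le hpos hratio hC hθ)
  refine ⟨u₀, fun φ hφ B hB hφB => ?_⟩
  rw [Measure.real, Measure.real, ← ENNReal.toReal_ofReal hC0, ← ENNReal.toReal_mul,
    hFGM.measure_lt_and_mem hX hY (hφ.sub_const s) hB]
  refine ENNReal.toReal_mono (by finiteness) ?_
  rw [hFGM.measure_lt_and_mem hX hY hφ hB, ← lintegral_const_mul' _ _ ENNReal.ofReal_ne_top]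
  refine setLIntegral_mono' hB fun y hy => ?_
  rw [← ENNReal.ofReal_mul hC0]
  exact ENNReal.ofReal_le_ofReal (hu₀ _ (hφB y hy) _ (abs_mul_signedRank_le_abs θ y))

lemma FGM.one_sub_abs_mul_le_real (hFGM : FGM X Y θ) (hX : Measurable X) (hY : Measurable Y)
    {S T : Set ℝ} (hS : MeasurableSet S) (hT : MeasurableSet T) :
    (1 - |θ|) * ((Measure.map X ℙ).real S * (Measure.map Y ℙ).real T) ≤
      (ℙ : Measure Ω).real (X ⁻¹' S ∩ Y ⁻¹' T) := by
  have := Measure.isProbabilityMeasure_map (μ := ℙ) hX.aemeasurable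
  have := Measure.isProbabilityMeasure_map (μ := ℙ) hY.aemeasurable
  have h := smul_prod_le_fgmLaw (θ := θ) (μ := Measure.map X ℙ) (ν := Measure.map Y ℙ) (S ×ˢ T)
  rw [← hFGM.map_eq_fgmLaw hX hY, Measure.map_apply (hX.prodMk hY) (hS.prod hT),
    Measure.smul_apply, Measure.prod_prod, smul_eq_mul] at h
  have h' := ENNReal.toReal_mono (by finiteness) h
  rwa [ENNReal.toReal_mul, ENNReal.toReal_mul,
    ENNReal.toReal_ofReal (sub_nonneg.mpr (abs_le.mpr hFGM.1))] at h'

lemma FGM.real_le_one_add_abs_mul (hFGM : FGM X Y θ) (hX : Measurable X) (hY : Measurable Y)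
    {S T : Set ℝ} (hS : MeasurableSet S) (hT : MeasurableSet T) :
    (ℙ : Measure Ω).real (X ⁻¹' S ∩ Y ⁻¹' T) ≤
      (1 + |θ|) * ((Measure.map X ℙ).real S * (Measure.map Y ℙ).real T) := by
  have := Measure.isProbabilityMeasure_map (μ := ℙ) hX.aemeasurable
  have := Measure.isProbabilityMeasure_map (μ := ℙ) hY.aemeasurable
  have h := fgmLaw_le_smul_prod (θ := θ) (μ := Measure.map X ℙ) (ν := Measure.map Y ℙ) (S ×ˢ T)
  rw [← hFGM.map_eq_fgmLaw hX hY, Measure.map_apply (hX.prodMk hY) (hS.prod hT),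
    Measure.smul_apply, Measure.prod_prod, smul_eq_mul] at h
  have h' := ENNReal.toReal_mono (by finiteness) h
  rwa [ENNReal.toReal_mul, ENNReal.toReal_mul, ENNReal.toReal_ofReal (by positivity)] at h'

lemma FGM.mul_rvTail_le_rvTail_mul (hFGM : FGM X Y θ) (hX : Measurable X) (hY : Measurable Y)
    {y x : ℝ} (hy : 0 < y) (hx : 0 ≤ x) :
    (1 - |θ|) * (rvTail X (x / y) * rvTail Y y) ≤ rvTail (fun ω => X ω * Y ω) x := by
  rw [← real_map_Ioi hX, ← real_map_Ioi hY]
  refine (hFGM.one_sub_abs_mul_le_real hX hY measurableSet_Ioi measurableSet_Ioi).trans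
    (measureReal_mono fun ω ⟨hXω, hYω⟩ => ?_)
  have hX0 : 0 < X ω := (div_nonneg hx hy.le).trans_lt hXω
  exact ((div_lt_iff₀ hy).mp hXω).trans (mul_lt_mul_of_pos_left hYω hX0)

lemma FGM.unboundedDist_mul (hFGM : FGM X Y θ) (hX : Measurable X) (hY : Measurable Y)
    (hθ : |θ| < 1) (hXunb : UnboundedDist X) (hYpos : ∃ y > 0, 0 < rvTail Y y) :
    UnboundedDist fun ω => X ω * Y ω := by
  obtain ⟨y, hy, hyt⟩ := hYpos
  exact fun x hx => (mul_pos (sub_pos.mpr hθ) (mul_pos (hXunb.rvTail_pos _) hyt)).trans_le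
    (hFGM.mul_rvTail_le_rvTail_mul hX hY hy hx.le)

end Product

section ProductTail

variable {Ω : Type*} [MeasureSpace Ω] [IsProbabilityMeasure (ℙ : Measure Ω)]
  {X Y : Ω → ℝ} {θ γ t : ℝ}

lemma lt_and_mem_Ioc_of_lt_mul {a b x M : ℝ} (hx : 0 ≤ x) (hb : 0 ≤ b) (hM : b ≤ M)
    (h : x < a * b) : x / M < a ∧ b ∈ Ioc 0 M := by
  have ha : 0 < a := pos_of_mul_pos_left (hx.trans_lt h) hb
  have hb0 : 0 < b := pos_of_mul_pos_right (hx.trans_lt h) ha.le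
  exact ⟨(div_lt_iff₀ (hb0.trans_le hM)).mpr (h.trans_le (mul_le_mul_of_nonneg_left hM ha.le)),
    hb0, hM⟩

lemma FGM.eventually_real_le_of_le (hFGM : FGM X Y θ) (hX : Measurable X) (hY : Measurable Y)
    (hY0 : ∀ ω, 0 ≤ Y ω) (hXL : MemLGamma X γ) {M M' s ε : ℝ} (hM : 0 < M) (hMM' : M < M')
    (hε : 0 ≤ ε)
    (hs : (1 + |θ|) * (Real.exp (-(γ * s)) * (Measure.map Y ℙ).real (Ioc 0 M)) <
      ε * ((1 - |θ|) * rvTail Y M')) (t : ℝ) :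
    ∀ᶠ x in atTop, (ℙ : Measure Ω).real {ω | x - t < X ω * Y ω ∧ Y ω ≤ M} ≤
      ε * rvTail (fun ω => X ω * Y ω) x := by
  have hM' : 0 < M' := hM.trans hMM'
  set p := (Measure.map Y ℙ).real (Ioc 0 M)
  have hshift : Tendsto (fun x => x * (M⁻¹ - M'⁻¹)) atTop atTop :=
    tendsto_id.atTop_mul_const (sub_pos.mpr (inv_strictAnti₀ hM hMM'))
  have hratio : Tendsto (fun u => (1 + |θ|) * (rvTail X (u + s) / rvTail X u * p)) atTop
      (nhds ((1 + |θ|) * (Real.exp (-(γ * s)) * p))) := by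
    simpa using ((hXL.tendsto_div (-s)).mul_const p).const_mul (1 + |θ|)
  filter_upwards [eventually_ge_atTop 0, eventually_ge_atTop t,
    hshift.eventually_ge_atTop (s + t / M),
    (tendsto_id.atTop_div_const hM').eventually (hratio.eventually_lt_const hs)]
    with x hx0 hxt hxs hlt
  have hle : x / M' + s ≤ (x - t) / M := by
    rw [sub_div, div_eq_mul_inv, div_eq_mul_inv x]
    linarith
  have hsub : {ω | x - t < X ω * Y ω ∧ Y ω ≤ M} ⊆ X ⁻¹' Ioi (x / M' + s) ∩ Y ⁻¹' Ioc 0 M :=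
    fun ω ⟨hω, hYM⟩ => (lt_and_mem_Ioc_of_lt_mul (sub_nonneg.mpr hxt) (hY0 ω) hYM hω).imp_left
      hle.trans_lt
  have hXpos := hXL.1.rvTail_pos (x / M')
  calc (ℙ : Measure Ω).real {ω | x - t < X ω * Y ω ∧ Y ω ≤ M}
      ≤ (ℙ : Measure Ω).real (X ⁻¹' Ioi (x / M' + s) ∩ Y ⁻¹' Ioc 0 M) := measureReal_mono hsub
    _ ≤ (1 + |θ|) * (rvTail X (x / M' + s) * p) := by
        rw [← real_map_Ioi hX]
        exact hFGM.real_le_one_add_abs_mul hX hY measurableSet_Ioi measurableSet_Ioc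
    _ = (1 + |θ|) * (rvTail X (x / M' + s) / rvTail X (x / M') * p) * rvTail X (x / M') := by
        field_simp
    _ ≤ ε * ((1 - |θ|) * rvTail Y M') * rvTail X (x / M') :=
        mul_le_mul_of_nonneg_right hlt.le hXpos.le
    _ = ε * ((1 - |θ|) * (rvTail X (x / M') * rvTail Y M')) := by ring
    _ ≤ ε * rvTail (fun ω => X ω * Y ω) x :=
        mul_le_mul_of_nonneg_left (hFGM.mul_rvTail_le_rvTail_mul hX hY hM' hx0) hε

lemma exists_lt_exp_lt_and_exp_neg_mul_lt (ν : Measure ℝ) [IsFiniteMeasure ν] {C κ M' : ℝ}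
    (hγ : 0 ≤ γ) (hM' : 0 < M') (hC : Real.exp (γ * (t / M')) < C) (hκ : 0 < κ) :
    ∃ M s, 0 < M ∧ M < M' ∧ Real.exp (γ * (t / M)) < C ∧
      Real.exp (-(γ * s)) * ν.real (Ioc 0 M) < κ := by
  rcases hγ.eq_or_lt with rfl | hγ
  · obtain ⟨M, hMκ, hM0, hMM'⟩ := (((tendsto_real_Ioc_nhdsGT_zero ν 0).eventually_lt_const hκ).and
      (Ioo_mem_nhdsGT hM')).exists
    exact ⟨M, 0, hM0, hMM', by simpa using hC, by simpa using hMκ⟩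
  · have hcont : ContinuousAt (fun M : ℝ => Real.exp (γ * (t / M))) M' :=
      ((continuousAt_const.div continuousAt_id hM'.ne').const_mul γ).rexp
    obtain ⟨M, hMC, hM0, hMM'⟩ := ((hcont.eventually_lt_const hC).filter_mono
      nhdsWithin_le_nhds |>.and (Ioo_mem_nhdsLT hM')).exists
    have hexp : Tendsto (fun s => Real.exp (-(γ * s)) * ν.real (Ioc 0 M)) atTop (nhds 0) := by
      simpa using (Real.tendsto_exp_neg_atTop_nhds_zero.comp
        (tendsto_id.const_mul_atTop hγ)).mul_const (ν.real (Ioc 0 M))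
    obtain ⟨s, hs⟩ := (hexp.eventually_lt_const hκ).exists
    exact ⟨M, s, hM0, hMM', hMC, hs⟩

lemma FGM.exists_exp_lt_and_eventually_real_le (hFGM : FGM X Y θ) (hX : Measurable X)
    (hY : Measurable Y) (hY0 : ∀ ω, 0 ≤ Y ω) (hYpos : ∃ y > 0, 0 < rvTail Y y) (hθ : |θ| < 1)
    (hγ : 0 ≤ γ) (hXL : MemLGamma X γ) (ht : 0 < t) {C ε : ℝ}
    (hC : Real.exp (gammaOverBeta Y γ * t) < C) (hε : 0 < ε) :
    ∃ M > 0, Real.exp (γ * (t / M)) < C ∧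
      ∀ᶠ x in atTop, (ℙ : Measure Ω).real {ω | x - t < X ω * Y ω ∧ Y ω ≤ M} ≤
        ε * rvTail (fun ω => X ω * Y ω) x := by
  obtain ⟨M', hM', hM't, hM'C⟩ := exists_rvTail_pos_exp_lt hYpos hγ ht hC
  have hκ : 0 < ε * ((1 - |θ|) * rvTail Y M') / (1 + |θ|) :=
    div_pos (mul_pos hε (mul_pos (sub_pos.mpr hθ) hM't)) (by positivity)
  obtain ⟨M, s, hM, hMM', hMC, hs⟩ :=
    exists_lt_exp_lt_and_exp_neg_mul_lt (Measure.map Y ℙ) hγ hM' hM'C hκ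
  rw [lt_div_iff₀' (by positivity)] at hs
  exact ⟨M, hM, hMC, hFGM.eventually_real_le_of_le hX hY hY0 hXL hM hMM' hε.le hs t⟩

lemma FGM.exists_eventually_real_mem_Ioc_le (hFGM : FGM X Y θ) (hX : Measurable X)
    (hY : Measurable Y) (hθ : |θ| < 1) (hXL : MemLGamma X γ) (ht : 0 ≤ t) {M C : ℝ} (hM : 0 < M)
    (hC : Real.exp (γ * (t / M)) < C) :
    ∃ b > 0, ∀ᶠ x in atTop, (ℙ : Measure Ω).real {ω | x - t < X ω * Y ω ∧ Y ω ∈ Ioc M (b * x)} ≤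
      C * rvTail (fun ω => X ω * Y ω) x := by
  obtain ⟨u₀, hu₀⟩ := hFGM.exists_forall_real_sub_lt_le hX hY hθ hXL hC
  have hu₁ : 0 < max u₀ 1 := by positivity
  refine ⟨(max u₀ 1)⁻¹, inv_pos.mpr hu₁, .of_forall fun x => ?_⟩
  have hB : ∀ y ∈ Ioc M ((max u₀ 1)⁻¹ * x), u₀ ≤ x / y := fun y ⟨hMy, hyx⟩ => by
    rw [le_inv_mul_iff₀ hu₁] at hyx
    exact (le_max_left u₀ 1).trans ((le_div_iff₀ (hM.trans hMy)).mpr hyx)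
  refine (measureReal_mono ?_).trans ((hu₀ (x / ·) (measurable_const.div measurable_id) _
    measurableSet_Ioc hB).trans (mul_le_mul_of_nonneg_left (measureReal_mono ?_)
      ((Real.exp_pos _).le.trans hC.le)))
  · rintro ω ⟨hω, hYω⟩
    have hY0 : 0 < Y ω := hM.trans hYω.1
    refine ⟨?_, hYω⟩
    calc x / Y ω - t / M ≤ x / Y ω - t / Y ω :=
          sub_le_sub_left (div_le_div_of_nonneg_left ht hM hYω.1.le) _
      _ = (x - t) / Y ω := (sub_div _ _ _).symm
      _ < X ω := (div_lt_iff₀ hY0).mpr hω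
  · rintro ω ⟨hω, hYω⟩
    exact (div_lt_iff₀ (hM.trans hYω.1)).mp hω

lemma FGM.eventually_rvTail_mul_sub_le (hFGM : FGM X Y θ) (hX : Measurable X)
    (hY : Measurable Y) (hY0 : ∀ ω, 0 ≤ Y ω) (hYpos : ∃ y > 0, 0 < rvTail Y y) (hθ : |θ| < 1)
    (hA2 : Assumption2 X Y) (hγ : 0 ≤ γ) (hXL : MemLGamma X γ) (ht : 0 < t) {C : ℝ}
    (hC : Real.exp (gammaOverBeta Y γ * t) < C) :
    ∀ᶠ x in atTop, rvTail (fun ω => X ω * Y ω) (x - t) ≤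
      C * rvTail (fun ω => X ω * Y ω) x := by
  obtain ⟨C', hC', hC'C⟩ := exists_between hC
  have hε : 0 < (C - C') / 2 := half_pos (sub_pos.mpr hC'C)
  obtain ⟨M, hM, hMC', hsmall⟩ :=
    hFGM.exists_exp_lt_and_eventually_real_le hX hY hY0 hYpos hθ hγ hXL ht hC' hε
  obtain ⟨b, hb, hmiddle⟩ :=
    hFGM.exists_eventually_real_mem_Ioc_le hX hY hθ hXL ht.le hM hMC'
  filter_upwards [hsmall, hmiddle, (hA2 b hb).bound hε] with x hsmall hmiddle hlarge
  rw [Real.norm_of_nonneg (rvTail_nonneg _ _), Real.norm_of_nonneg (rvTail_nonneg _ _)] at hlarge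
  have hcover : {ω | x - t < X ω * Y ω} ⊆ {ω | x - t < X ω * Y ω ∧ Y ω ≤ M} ∪
      {ω | x - t < X ω * Y ω ∧ Y ω ∈ Ioc M (b * x)} ∪ {ω | b * x < Y ω} := by
    intro ω hω
    rcases le_or_gt (Y ω) M with hYM | hYM
    · exact .inl (.inl ⟨hω, hYM⟩)
    rcases le_or_gt (Y ω) (b * x) with hYx | hYx
    · exact .inl (.inr ⟨hω, hYM, hYx⟩)
    · exact .inr hYx
  calc rvTail (fun ω => X ω * Y ω) (x - t)
      ≤ (ℙ : Measure Ω).real {ω | x - t < X ω * Y ω ∧ Y ω ≤ M} +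
          (ℙ : Measure Ω).real {ω | x - t < X ω * Y ω ∧ Y ω ∈ Ioc M (b * x)} +
          rvTail Y (b * x) :=
        (measureReal_mono hcover).trans ((measureReal_union_le _ _).trans
          (add_le_add_left (measureReal_union_le _ _) _))
    _ ≤ C * rvTail (fun ω => X ω * Y ω) x := by linarith

lemma FGM.eventually_rvTail_mul_le_of_ae_le (hFGM : FGM X Y θ) (hX : Measurable X)
    (hY : Measurable Y) (hY0 : ∀ ω, 0 ≤ Y ω) (hθ : |θ| < 1) (hXL : MemLGamma X γ) (ht : 0 ≤ t)
    {β D : ℝ} (hβ : 0 < β) (hYβ : ∀ᵐ ω, Y ω ≤ β) (hD : Real.exp (-(γ / β * t)) < D) :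
    ∀ᶠ x in atTop, rvTail (fun ω => X ω * Y ω) x ≤
      D * rvTail (fun ω => X ω * Y ω) (x - t) := by
  have hD' : Real.exp (γ * -(t / β)) < D := by rwa [mul_neg, mul_div_left_comm, mul_comm]
  obtain ⟨u₀, hu₀⟩ := hFGM.exists_forall_real_sub_lt_le hX hY hθ hXL hD'
  filter_upwards [eventually_ge_atTop 0, eventually_ge_atTop ((u₀ + t / β) * β)] with x hx hxu
  have hB : ∀ y ∈ Ioc 0 β, u₀ ≤ x / y - t / β := fun y ⟨hy0, hyβ⟩ =>
    le_sub_iff_add_le.mpr (((le_div_iff₀ hβ).mpr hxu).trans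
      (div_le_div_of_nonneg_left hx hy0 hyβ))
  have hae : ∀ᵐ ω, x < X ω * Y ω → x / Y ω - t / β - -(t / β) < X ω ∧ Y ω ∈ Ioc 0 β := by
    filter_upwards [hYβ] with ω hYω hω
    rw [sub_sub, add_neg_cancel, sub_zero]
    exact ⟨(lt_and_mem_Ioc_of_lt_mul hx (hY0 ω) le_rfl hω).1,
      (lt_and_mem_Ioc_of_lt_mul hx (hY0 ω) hYω hω).2⟩
  refine (ENNReal.toReal_mono (measure_ne_top _ _) (measure_mono_ae hae)).trans
    ((hu₀ (fun y => x / y - t / β) (by fun_prop) _ measurableSet_Ioc hB).trans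
      (mul_le_mul_of_nonneg_left (measureReal_mono ?_) ((Real.exp_pos _).le.trans hD.le)))
  rintro ω ⟨hω, hY0, hYβ⟩
  refine (div_lt_iff₀ hY0).mp ?_
  calc (x - t) / Y ω = x / Y ω - t / Y ω := sub_div _ _ _
    _ ≤ x / Y ω - t / β := sub_le_sub_left (div_le_div_of_nonneg_left ht hY0 hYβ) _
    _ < X ω := hω

lemma FGM.eventually_rvTail_mul_le (hFGM : FGM X Y θ) (hX : Measurable X)
    (hY : Measurable Y) (hY0 : ∀ ω, 0 ≤ Y ω) (hYpos : ∃ y > 0, 0 < rvTail Y y) (hθ : |θ| < 1)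
    (hXL : MemLGamma X γ) (ht : 0 ≤ t) {D : ℝ}
    (hD : Real.exp (-(gammaOverBeta Y γ * t)) < D) :
    ∀ᶠ x in atTop, rvTail (fun ω => X ω * Y ω) x ≤
      D * rvTail (fun ω => X ω * Y ω) (x - t) := by
  rw [gammaOverBeta] at hD
  split_ifs at hD with hbdd
  · obtain ⟨y, hy, hyt⟩ := hYpos
    refine hFGM.eventually_rvTail_mul_le_of_ae_le hX hY hY0 hθ hXL ht
      (hy.trans_le (le_csSup hbdd hyt)) (ae_le_of_forall_rvTail_eq_zero fun z hz => ?_) hD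
    exact (not_lt.mp fun hzt => (le_csSup hbdd hzt).not_gt hz).antisymm (rvTail_nonneg Y z)
  · rw [zero_mul, neg_zero, Real.exp_zero] at hD
    exact .of_forall fun x => (antitone_rvTail _ (sub_le_self x ht)).trans
      (le_mul_of_one_le_left (rvTail_nonneg _ _) hD.le)

end ProductTail

theorem product_memL_of_fgm {Ω : Type*} [MeasureSpace Ω] [IsProbabilityMeasure (ℙ : Measure Ω)]
    (X Y : Ω → ℝ) (hXm : Measurable X) (hYm : Measurable Y)
    (hYnonneg : ∀ ω, 0 ≤ Y ω)
    (hFunb : UnboundedDist X)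
    (hXnd : ℙ {ω | X ω = 0} ≠ 1) (hYnd : ℙ {ω | Y ω = 0} ≠ 1)
    (θ : ℝ) (hθ : |θ| < 1) (hFGM : FGM X Y θ) (hA2 : Assumption2 X Y)
    (γ : ℝ) (hγ : 0 ≤ γ) (hFL : MemLGamma X γ) :
    MemLGamma (fun ω => X ω * Y ω) (gammaOverBeta Y γ) := by
  have hYpos : ∃ y > 0, 0 < rvTail Y y := exists_rvTail_pos hYm hYnonneg hYnd
  exact memLGamma_of_eventually_le (hFGM.unboundedDist_mul hXm hYm hθ hFunb hYpos)
    (fun t ht C hC =>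
      hFGM.eventually_rvTail_mul_sub_le hXm hYm hYnonneg hYpos hθ hA2 hγ hFL ht hC)
    (fun t ht D hD =>
      hFGM.eventually_rvTail_mul_le hXm hYm hYnonneg hYpos hθ hFL ht.le hD)
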